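/- arXiv:solv-int/9705015 — 6 statements merged into one kernel-verified Lean document; each statement's English description precedes it below -/
import Mathlib

section
/- For all l₁, l₂ ∈ ℤ one has ⁅σ l₁, σ l₂⁆ = ((l₁ : ℝ) − (l₂ : ℝ)) • σ (l₁ + l₂); i.e., the elements σ l themselves satisfy the Witt (centreless Virasoro) commutation relations, so that together with the K l they constitute a Lie algebra with the same commutation relations as the original centreless Virasoro algebra. -/
/-- The elements `σ l = ∑ j, β j • ((i j + γ) • K (i j + l)) + ρ l` themselves satisfy the
Witt (centreless Virasoro) commutation relations. -/
theorem stmt_1 {L : Type*} [LieRing L] [LieAlgebra ℝ L]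
    (γ : ℝ) (K ρ : ℤ → L)
    (hKK : ∀ l₁ l₂ : ℤ, ⁅K l₁, K l₂⁆ = 0)
    (hKρ : ∀ l₁ l₂ : ℤ, ⁅K l₁, ρ l₂⁆ = ((l₁ : ℝ) + γ) • K (l₁ + l₂))
    (hρρ : ∀ l₁ l₂ : ℤ, ⁅ρ l₁, ρ l₂⁆ = ((l₁ : ℝ) - (l₂ : ℝ)) • ρ (l₁ + l₂))
    (m : ℕ) (i : Fin m → ℤ) (β : Fin m → ℝ)
    (σ : ℤ → L)
    (hσ : ∀ l : ℤ, σ l = (∑ j, β j • ((((i j) : ℝ) + γ) • K (i j + l))) + ρ l) :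
    ∀ l₁ l₂ : ℤ, ⁅σ l₁, σ l₂⁆ = ((l₁ : ℝ) - (l₂ : ℝ)) • σ (l₁ + l₂) := by
  intro l₁ l₂
  have hSS : ⁅∑ j, β j • ((((i j) : ℝ) + γ) • K (i j + l₁)),
      ∑ j, β j • ((((i j) : ℝ) + γ) • K (i j + l₂))⁆ = 0 := by
    simp [sum_lie, lie_sum, hKK]
  have hSρ : ∀ a b : ℤ, ⁅∑ j, β j • ((((i j) : ℝ) + γ) • K (i j + a)), ρ b⁆ =
      ∑ j, (β j * (((i j) : ℝ) + γ) * (((i j) : ℝ) + a + γ)) • K (i j + (a + b)) := by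
    intro a b
    rw [sum_lie]
    refine Finset.sum_congr rfl fun j _ => ?_
    rw [smul_lie, smul_lie, hKρ, smul_smul, smul_smul, add_assoc (i j)]
    push_cast
    congr 1
  rw [hσ l₁, hσ l₂, hσ (l₁ + l₂), add_lie, lie_add, lie_add, hSS, hSρ, hρρ,
    ← lie_skew (ρ l₁), hSρ, add_comm l₂ l₁, zero_add, smul_add, ← add_assoc,
    ← sub_eq_add_neg, ← Finset.sum_sub_distrib, Finset.smul_sum]
  congr 1
  refine Finset.sum_congr rfl fun j _ => ?_
  rw [← sub_smul, smul_smul, smul_smul]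
  congr 1
  ring
end

section
/- For each j : Fin m define the map A j : L → L by (A j) x = x + (β j) • ⁅K (i j), x⁆ (this is exp(ad_{T_j}) with T_j = β_j K_{i_j}, since ad_{K_{i_j}} is 2-step nilpotent on the relevant elements). Then for every l : ℤ, the composition A (m−1) ∘ ⋯ ∘ A 1 ∘ A 0 applied to ρ l equals σ l = (∑ j, β j • ((((i j) : ℝ) + γ) • K (i j + l))) + ρ l, and the result is independent of the order of composition. -/
/-- For `A j x = x + β j • ⁅K (i j), x⁆` (i.e. `exp(ad_{β_j K_{i_j}})`), the composition
of the `A j` in any order, applied to `ρ l`, equals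
`σ l = ∑ j, β j • ((i j + γ) • K (i j + l)) + ρ l`; in particular the result is
independent of the order of composition. -/
theorem stmt_4 {L : Type*} [LieRing L] [LieAlgebra ℝ L]
    (γ : ℝ) (K ρ : ℤ → L)
    (hKK : ∀ l₁ l₂ : ℤ, ⁅K l₁, K l₂⁆ = 0)
    (hKρ : ∀ l₁ l₂ : ℤ, ⁅K l₁, ρ l₂⁆ = ((l₁ : ℝ) + γ) • K (l₁ + l₂))
    (hρρ : ∀ l₁ l₂ : ℤ, ⁅ρ l₁, ρ l₂⁆ = ((l₁ : ℝ) - (l₂ : ℝ)) • ρ (l₁ + l₂))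
    (m : ℕ) (i : Fin m → ℤ) (β : Fin m → ℝ)
    (A : Fin m → L → L)
    (hA : ∀ (j : Fin m) (x : L), A j x = x + β j • ⁅K (i j), x⁆) :
    ∀ (l : ℤ) (π : Equiv.Perm (Fin m)),
      ((List.ofFn fun j => A (π j)).foldr (· ∘ ·) id) (ρ l)
        = (∑ j, β j • ((((i j) : ℝ) + γ) • K (i j + l))) + ρ l := by
  intro l π
  have hz : ∀ (k : ℤ) (s : List (Fin m)),
      ⁅K k, (s.map fun j => β j • ((((i j) : ℝ) + γ) • K (i j + l))).sum⁆ = 0 := by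
    intro k s
    induction s with
    | nil => simp
    | cons a s ih =>
      rw [List.map_cons, List.sum_cons, lie_add, ih, lie_smul, lie_smul, hKK]
      simp
  have key : ∀ s : List (Fin m), ((s.map A).foldr (· ∘ ·) id) (ρ l)
      = (s.map fun j => β j • ((((i j) : ℝ) + γ) • K (i j + l))).sum + ρ l := by
    intro s
    induction s with
    | nil => simp
    | cons a s ih =>
      rw [List.map_cons, List.foldr_cons, Function.comp_apply, ih, hA, lie_add, hz, hKρ,
        List.map_cons, List.sum_cons, zero_add]
      abel
  have h := key (List.ofFn π)
  rw [List.map_ofFn, List.map_ofFn, List.sum_ofFn] at h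
  refine Eq.trans h ?_
  congr 1
  exact Equiv.sum_comp π (fun j => β j • ((((i j) : ℝ) + γ) • K (i j + l)))
end

section
/- If K ∈ E 0 and ρ ∈ E l (l : ℕ), then (ad K)^(l+1) ρ = 0; i.e., in a graded Lie algebra with ⁅E(R_i), E(R_j)⁆ ⊆ E(R_{i+j−1}) and E(R_{−1}) = 0, the adjoint action of a degree-0 element is nilpotent on each graded piece, so the exponential series exp(ad_{β K}) ρ truncates after the term of order l. -/
/-- In a graded Lie algebra with `⁅E(R_i), E(R_j)⁆ ⊆ E(R_{i+j-1})` and `E(R_{-1}) = 0`,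
the adjoint action of a degree-0 element `K` is nilpotent on each graded piece:
`(ad K)^(l+1) ρ = 0` for `ρ ∈ E l`. -/
theorem stmt_5 {L : Type*} [LieRing L] [LieAlgebra ℝ L]
    (E : ℕ → Submodule ℝ L)
    (h0 : ∀ a ∈ E 0, ∀ b ∈ E 0, ⁅a, b⁆ = 0)
    (h1 : ∀ i j : ℕ, 1 ≤ i + j → ∀ a ∈ E i, ∀ b ∈ E j, ⁅a, b⁆ ∈ E (i + j - 1))
    (K : L) (hK : K ∈ E 0) (l : ℕ) (ρ : L) (hρ : ρ ∈ E l) :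
    (fun y => ⁅K, y⁆)^[l + 1] ρ = 0 := by
  induction l generalizing ρ with
  | zero => exact h0 K hK ρ hρ
  | succ n ih =>
    rw [Function.iterate_succ_apply]
    apply ih
    have h := h1 0 (n + 1) (by omega) K hK ρ hρ
    have e : 0 + (n + 1) - 1 = n := by omega
    rw [e] at h
    exact h
end

section
/- For ρ₁ ∈ E l₁ and ρ₂ ∈ E l₂ one has ⁅σ_β(ρ₁, l₁), σ_β(ρ₂, l₂)⁆ = σ_β(⁅ρ₁, ρ₂⁆, l₁ + l₂ − 1), where l₁ + l₂ − 1 is truncated natural subtraction (when l₁ = l₂ = 0 both sides vanish since E 0 is abelian). In other words, the map σ_β = exp(ad_{T_m}) ∘ ⋯ ∘ exp(ad_{T_1}) with T_i = β_i K_i is a Lie algebra homomorphism from the graded Lie algebra E(R) = ∑_i E(R_i) onto the graded symmetry algebra σ_β(E(R)). -/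
/-- The iterated adjoint `D^j = (ad (K 0))^(j 0) ∘ ⋯ ∘ (ad (K (m-1)))^(j (m-1))`. -/
def adPow {L : Type*} [LieRing L] {m : ℕ} (K : Fin m → L) (j : Fin m → ℕ) : L → L :=
  (List.ofFn fun i => (fun y => ⁅K i, y⁆)^[j i]).foldr (· ∘ ·) id

/-- `σ_β(ρ, l) = ∑_{|j| ≤ l} (∏ i, β i ^ (j i) / (j i)!) • D^j ρ`, the image of a graded
element `ρ ∈ E l` under `exp(ad_{T_m}) ∘ ⋯ ∘ exp(ad_{T_1})` with `T_i = β_i K_i`.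
(Since `j i ≤ |j| ≤ l` for each component, summing over `j ∈ (range (l+1))^m` with
`|j| ≤ l` captures all multi-indices with `|j| ≤ l`.) -/
noncomputable def sigmaB {L : Type*} [LieRing L] [LieAlgebra ℝ L] {m : ℕ}
    (K : Fin m → L) (β : Fin m → ℝ) (l : ℕ) (ρ : L) : L :=
  ∑ j ∈ (Fintype.piFinset fun _ : Fin m => Finset.range (l + 1)).filter
      (fun j => ∑ i, j i ≤ l),
    (∏ i, (β i) ^ (j i) / ((j i).factorial : ℝ)) • adPow K j ρ

/-- Truncated exponential of `b • ad x`. -/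
noncomputable def tExp {L : Type*} [LieRing L] [LieAlgebra ℝ L] (x : L) (b : ℝ) (N : ℕ) :
    L →ₗ[ℝ] L :=
  ∑ k ∈ Finset.range (N + 1), (b ^ k / (k.factorial : ℝ)) • (LieAlgebra.ad ℝ L x) ^ k

/-- Sum over the whole box. -/
noncomputable def boxSum {L : Type*} [LieRing L] [LieAlgebra ℝ L] {m : ℕ}
    (K : Fin m → L) (β : Fin m → ℝ) (N : ℕ) (ρ : L) : L :=
  ∑ j ∈ (Fintype.piFinset fun _ : Fin m => Finset.range (N + 1)),
    (∏ i, (β i) ^ (j i) / ((j i).factorial : ℝ)) • adPow K j ρ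

theorem adIter {L : Type*} [LieRing L] [LieAlgebra ℝ L] (x y : L) (k : ℕ) :
    (fun y => ⁅x, y⁆)^[k] y = ((LieAlgebra.ad ℝ L x) ^ k) y := by
  rw [Module.End.pow_apply]; rfl

theorem adPow_cons {L : Type*} [LieRing L] [LieAlgebra ℝ L] {m : ℕ} (K : Fin (m + 1) → L)
    (k : ℕ) (j : Fin m → ℕ) (y : L) :
    adPow K (Fin.cons k j) y =
      ((LieAlgebra.ad ℝ L (K 0)) ^ k) (adPow (fun i => K i.succ) j y) := by
  rw [← adIter]
  simp [adPow, List.ofFn_succ]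

theorem boxSum_succ {L : Type*} [LieRing L] [LieAlgebra ℝ L] {m : ℕ} (K : Fin (m + 1) → L)
    (β : Fin (m + 1) → ℝ) (N : ℕ) (y : L) :
    boxSum K β N y =
      tExp (K 0) (β 0) N (boxSum (fun i => K i.succ) (fun i => β i.succ) N y) := by
  unfold tExp boxSum
  rw [LinearMap.sum_apply]
  simp only [map_sum]
  rw [← Finset.sum_product']
  refine Finset.sum_nbij' (fun j => (j 0, fun i => j i.succ)) (fun p => Fin.cons p.1 p.2)
    ?_ ?_ ?_ ?_ ?_
  · intro j hj
    simp only [Fintype.mem_piFinset, Finset.mem_product] at hj ⊢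
    exact ⟨hj 0, fun i => hj i.succ⟩
  · rintro ⟨k, j⟩ hj
    simp only [Fintype.mem_piFinset, Finset.mem_product] at hj ⊢
    intro i
    refine Fin.cases ?_ ?_ i
    · exact hj.1
    · exact hj.2
  · intro j _
    exact Fin.cons_self_tail j
  · rintro ⟨k, j⟩ _
    simp
  · intro j _
    obtain ⟨k, j, rfl⟩ : ∃ k t, j = Fin.cons k t := ⟨j 0, Fin.tail j, (Fin.cons_self_tail j).symm⟩
    rw [adPow_cons]
    simp only [Fin.prod_univ_succ, Fin.cons_zero, Fin.cons_succ, map_smul, LinearMap.smul_apply,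
      smul_smul]
    rw [mul_comm]

theorem adpow_mem {L : Type*} [LieRing L] [LieAlgebra ℝ L] (Z : ℕ → Submodule ℝ L) (x : L)
    (hx : ∀ n, ∀ y ∈ Z n, ⁅x, y⁆ ∈ Z (n - 1)) (k n : ℕ) (y : L) (hy : y ∈ Z n) :
    ((LieAlgebra.ad ℝ L x) ^ k) y ∈ Z (n - k) := by
  induction k with
  | zero => simpa using hy
  | succ k ih =>
    rw [pow_succ', Module.End.mul_apply, LieAlgebra.ad_apply, ← Nat.sub_sub]
    exact hx _ _ ih

theorem adPow_mem {L : Type*} [LieRing L] [LieAlgebra ℝ L] (Z : ℕ → Submodule ℝ L) {m : ℕ}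
    (K : Fin m → L)
    (hx : ∀ i n, ∀ y ∈ Z n, ⁅K i, y⁆ ∈ Z (n - 1)) (j : Fin m → ℕ) (n : ℕ) (y : L)
    (hy : y ∈ Z n) :
    adPow K j y ∈ Z (n - ∑ i, j i) := by
  induction m with
  | zero => simpa [adPow] using hy
  | succ m ih =>
    obtain ⟨k, j, rfl⟩ : ∃ k t, j = Fin.cons k t := ⟨j 0, Fin.tail j, (Fin.cons_self_tail j).symm⟩
    rw [adPow_cons]
    have := adpow_mem Z (K 0) (hx 0) k _ _ (ih (fun i => K i.succ) (fun i => hx i.succ) j)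
    simpa [Fin.sum_univ_succ, Nat.sub_sub, add_comm] using this

theorem tExp_mem {L : Type*} [LieRing L] [LieAlgebra ℝ L] (Z : ℕ → Submodule ℝ L)
    (hm : Monotone Z) (x : L)
    (hx : ∀ n, ∀ y ∈ Z n, ⁅x, y⁆ ∈ Z (n - 1)) (b : ℝ) (N n : ℕ) (y : L) (hy : y ∈ Z n) :
    tExp x b N y ∈ Z n := by
  unfold tExp
  rw [LinearMap.sum_apply]
  refine Submodule.sum_mem _ fun k _ => ?_
  rw [LinearMap.smul_apply]
  exact Submodule.smul_mem _ _ (hm (Nat.sub_le n k) (adpow_mem Z x hx k n y hy))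

theorem tExp_lie {L : Type*} [LieRing L] [LieAlgebra ℝ L] (Z : ℕ → Submodule ℝ L)
    (hz : Z 0 = ⊥) (x : L)
    (hx : ∀ n, ∀ y ∈ Z n, ⁅x, y⁆ ∈ Z (n - 1)) (b : ℝ) (N p q : ℕ) (y z : L)
    (hy : y ∈ Z (p + 1)) (hq : z ∈ Z (q + 1)) (hN : p + q ≤ N) :
    tExp x b N ⁅y, z⁆ = ⁅tExp x b N y, tExp x b N z⁆ := by
  have hv : ∀ n, ∀ w ∈ Z (n + 1), ∀ k, n < k → ((LieAlgebra.ad ℝ L x) ^ k) w = 0 := by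
    intro n w hw k hk
    have := adpow_mem Z x hx k _ w hw
    rwa [Nat.sub_eq_zero_of_le hk, hz, Submodule.mem_bot] at this
  unfold tExp
  simp only [LinearMap.sum_apply, LinearMap.smul_apply, LieAlgebra.ad_pow_lie, Finset.smul_sum]
  rw [sum_lie]
  simp only [lie_sum]
  rw [← Finset.sum_product']
  rw [Finset.sum_sigma']
  have hsub : ∑ ij ∈ (Finset.range (N + 1) ×ˢ Finset.range (N + 1)).filter
      (fun ij => ij.1 + ij.2 ≤ N),
      ⁅(b ^ ij.1 / (ij.1.factorial : ℝ)) • ((LieAlgebra.ad ℝ L x) ^ ij.1) y,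
        (b ^ ij.2 / (ij.2.factorial : ℝ)) • ((LieAlgebra.ad ℝ L x) ^ ij.2) z⁆ =
      ∑ ij ∈ (Finset.range (N + 1) ×ˢ Finset.range (N + 1)),
      ⁅(b ^ ij.1 / (ij.1.factorial : ℝ)) • ((LieAlgebra.ad ℝ L x) ^ ij.1) y,
        (b ^ ij.2 / (ij.2.factorial : ℝ)) • ((LieAlgebra.ad ℝ L x) ^ ij.2) z⁆ := by
    refine Finset.sum_subset (Finset.filter_subset _ _) ?_
    rintro ⟨i, j⟩ hij hn
    have hlt : N < i + j := by
      by_contra h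
      exact hn (Finset.mem_filter.2 ⟨hij, by simpa using h⟩)
    rcases lt_or_ge p i with h | h
    · simp [hv p y hy i h]
    · simp [hv q z hq j (by omega)]
  rw [← hsub]
  refine Finset.sum_nbij' (fun s => s.2) (fun ij => ⟨ij.1 + ij.2, ij⟩) ?_ ?_ ?_ ?_ ?_
  · rintro ⟨n, i, j⟩ h
    simp only [Finset.mem_sigma, Finset.mem_range, Finset.HasAntidiagonal.mem_antidiagonal, Finset.mem_filter,
      Finset.mem_product] at h ⊢
    omega
  · rintro ⟨i, j⟩ h
    simp only [Finset.mem_sigma, Finset.mem_range, Finset.HasAntidiagonal.mem_antidiagonal, Finset.mem_filter,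
      Finset.mem_product] at h ⊢
    exact ⟨by omega, trivial⟩
  · rintro ⟨n, i, j⟩ h
    simp only [Finset.mem_sigma, Finset.mem_range, Finset.HasAntidiagonal.mem_antidiagonal] at h
    obtain ⟨_, rfl⟩ := h
    rfl
  · rintro ⟨i, j⟩ h
    rfl
  · rintro ⟨n, i, j⟩ h
    simp only [Finset.mem_sigma, Finset.mem_range, Finset.HasAntidiagonal.mem_antidiagonal] at h
    obtain ⟨_, rfl⟩ := h
    simp only [smul_lie, lie_smul, smul_smul, ← Nat.cast_smul_eq_nsmul ℝ]
    congr 1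
    have h3 : ((i + j).choose i : ℝ) * i.factorial * j.factorial = (i + j).factorial := by
      have h4 := Nat.add_choose_mul_factorial_mul_factorial i j
      rw [Nat.choose_symm_add] at *
      exact_mod_cast h4
    have := Nat.cast_ne_zero (R := ℝ).2 (i.factorial_ne_zero)
    have := Nat.cast_ne_zero (R := ℝ).2 (j.factorial_ne_zero)
    have := Nat.cast_ne_zero (R := ℝ).2 ((i + j).factorial_ne_zero)
    rw [pow_add]
    field_simp
    rw [← h3]
    ring

theorem boxSum_mem {L : Type*} [LieRing L] [LieAlgebra ℝ L] (Z : ℕ → Submodule ℝ L)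
    (hm : Monotone Z) {m : ℕ} (K : Fin m → L)
    (hx : ∀ i n, ∀ y ∈ Z n, ⁅K i, y⁆ ∈ Z (n - 1)) (β : Fin m → ℝ) (N n : ℕ) (y : L)
    (hy : y ∈ Z n) : boxSum K β N y ∈ Z n := by
  unfold boxSum
  exact Submodule.sum_mem _ fun j _ => Submodule.smul_mem _ _
    (hm (Nat.sub_le _ _) (adPow_mem Z K hx j n y hy))

theorem boxSum_lie {L : Type*} [LieRing L] [LieAlgebra ℝ L] (Z : ℕ → Submodule ℝ L)
    (hz : Z 0 = ⊥) (hm : Monotone Z) {m : ℕ} (K : Fin m → L)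
    (hx : ∀ i n, ∀ y ∈ Z n, ⁅K i, y⁆ ∈ Z (n - 1)) (β : Fin m → ℝ) (N p q : ℕ) (y z : L)
    (hy : y ∈ Z (p + 1)) (hq : z ∈ Z (q + 1)) (hN : p + q ≤ N) :
    boxSum K β N ⁅y, z⁆ = ⁅boxSum K β N y, boxSum K β N z⁆ := by
  induction m with
  | zero => simp [boxSum, adPow]
  | succ m ih =>
    rw [boxSum_succ, boxSum_succ, boxSum_succ, ih _ (fun i => hx i.succ)]
    exact tExp_lie Z hz _ (hx 0) _ _ p q _ _
      (boxSum_mem Z hm _ (fun i => hx i.succ) _ _ _ _ hy)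
      (boxSum_mem Z hm _ (fun i => hx i.succ) _ _ _ _ hq) hN

theorem sigmaB_eq {L : Type*} [LieRing L] [LieAlgebra ℝ L] (Z : ℕ → Submodule ℝ L)
    (hz : Z 0 = ⊥) {m : ℕ} (K : Fin m → L)
    (hx : ∀ i n, ∀ y ∈ Z n, ⁅K i, y⁆ ∈ Z (n - 1)) (β : Fin m → ℝ) (N l : ℕ) (y : L)
    (hy : y ∈ Z (l + 1)) (hN : l ≤ N) :
    sigmaB K β l y = boxSum K β N y := by
  unfold sigmaB boxSum
  refine Finset.sum_subset ?_ ?_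
  · intro j hj
    simp only [Finset.mem_filter, Fintype.mem_piFinset, Finset.mem_range] at hj ⊢
    intro i
    have := hj.1 i
    omega
  · intro j _ hj
    have hlt : l < ∑ i, j i := by
      by_contra h
      apply hj
      simp only [Finset.mem_filter, Fintype.mem_piFinset, Finset.mem_range]
      refine ⟨fun i => ?_, by omega⟩
      have := Finset.single_le_sum (f := j) (fun _ _ => Nat.zero_le _) (Finset.mem_univ i)
      omega
    have := adPow_mem Z K hx j _ y hy
    rw [Nat.sub_eq_zero_of_le hlt, hz, Submodule.mem_bot] at this
    rw [this, smul_zero]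

/-- Elements killed by any `n` of the `ad (K i)`. -/
def zFil {L : Type*} [LieRing L] [LieAlgebra ℝ L] {m : ℕ} (K : Fin m → L) :
    ℕ → Submodule ℝ L
  | 0 => ⊥
  | n + 1 => ⨅ i, (zFil K n).comap (LieAlgebra.ad ℝ L (K i) : L →ₗ[ℝ] L)

theorem mem_zFil_succ {L : Type*} [LieRing L] [LieAlgebra ℝ L] {m : ℕ} (K : Fin m → L)
    (n : ℕ) (y : L) : y ∈ zFil K (n + 1) ↔ ∀ i, ⁅K i, y⁆ ∈ zFil K n := by
  simp [zFil]

theorem zFil_mono {L : Type*} [LieRing L] [LieAlgebra ℝ L] {m : ℕ} (K : Fin m → L) :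
    Monotone (zFil K) := by
  refine monotone_nat_of_le_succ fun n => ?_
  induction n with
  | zero => exact bot_le
  | succ n ih =>
    intro y hy
    rw [mem_zFil_succ] at hy ⊢
    exact fun i => ih (hy i)


/-- `σ_β` is a Lie algebra homomorphism from the graded Lie algebra `E(R) = ∑_i E(R_i)`
onto the graded symmetry algebra: for `ρ₁ ∈ E l₁` and `ρ₂ ∈ E l₂`,
`⁅σ_β(ρ₁, l₁), σ_β(ρ₂, l₂)⁆ = σ_β(⁅ρ₁, ρ₂⁆, l₁ + l₂ - 1)`. -/
theorem stmt_9 {L : Type*} [LieRing L] [LieAlgebra ℝ L]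
    (E : ℕ → Submodule ℝ L)
    (h0 : ∀ a ∈ E 0, ∀ b ∈ E 0, ⁅a, b⁆ = 0)
    (h1 : ∀ i j : ℕ, 1 ≤ i + j → ∀ a ∈ E i, ∀ b ∈ E j, ⁅a, b⁆ ∈ E (i + j - 1))
    (m : ℕ) (K : Fin m → L) (hK : ∀ i, K i ∈ E 0) (β : Fin m → ℝ)
    (l₁ l₂ : ℕ) (ρ₁ ρ₂ : L) (hρ₁ : ρ₁ ∈ E l₁) (hρ₂ : ρ₂ ∈ E l₂) :
    ⁅sigmaB K β l₁ ρ₁, sigmaB K β l₂ ρ₂⁆ = sigmaB K β (l₁ + l₂ - 1) ⁅ρ₁, ρ₂⁆ := by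

  have hx : ∀ i n, ∀ y ∈ zFil K n, ⁅K i, y⁆ ∈ zFil K (n - 1) := by
    intro i n y hy
    cases n with
    | zero =>
      have : y = 0 := by simpa [zFil] using hy
      simp [this]
    | succ n => exact (mem_zFil_succ K n y).1 hy i
  have hE : ∀ l, ∀ y ∈ E l, y ∈ zFil K (l + 1) := by
    intro l
    induction l with
    | zero =>
      intro y hy
      rw [mem_zFil_succ]
      intro i
      rw [h0 _ (hK i) _ hy]
      exact Submodule.zero_mem _
    | succ l ih =>
      intro y hy
      rw [mem_zFil_succ]
      intro i
      apply ih
      simpa using h1 0 (l + 1) (by omega) _ (hK i) _ hy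
  have hb : ⁅ρ₁, ρ₂⁆ ∈ zFil K (l₁ + l₂ - 1 + 1) := by
    rcases Nat.eq_zero_or_pos (l₁ + l₂) with h | h
    · obtain ⟨rfl, rfl⟩ : l₁ = 0 ∧ l₂ = 0 := by omega
      rw [h0 _ hρ₁ _ hρ₂]
      exact Submodule.zero_mem _
    · exact hE _ _ (h1 _ _ h _ hρ₁ _ hρ₂)
  rw [sigmaB_eq (zFil K) rfl K hx β (l₁ + l₂) l₁ ρ₁ (hE _ _ hρ₁) (by omega),
    sigmaB_eq (zFil K) rfl K hx β (l₁ + l₂) l₂ ρ₂ (hE _ _ hρ₂) (by omega),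
    sigmaB_eq (zFil K) rfl K hx β (l₁ + l₂) _ _ hb (by omega)]
  exact (boxSum_lie (zFil K) rfl (zFil_mono K) K hx β _ l₁ l₂ _ _ (hE _ _ hρ₁) (hE _ _ hρ₂)
    le_rfl).symm
end

section
/- For each i : Fin m define Φ i : L → L by (Φ i) x = ∑_{j=0}^{l} ((β i)^j / j!) • (ad (K i))^j x (the exponential exp(ad_{β_i K_i}), truncated at order l). Then for every ρ ∈ E l, the composition (Φ (m−1)) ∘ ⋯ ∘ (Φ 1) ∘ (Φ 0) applied to ρ equals the multi-index sum σ_β(ρ, l) = ∑_{|j| ≤ l} c_β(j) • D^j ρ; i.e., exp(ad_{T_m}) ⋯ exp(ad_{T_1}) ρ_l = ∑_{0 ≤ j₁+⋯+j_m ≤ l} (β₁^{j₁} ⋯ β_m^{j_m} / (j₁! ⋯ j_m!)) (ad_{K_1})^{j₁} ⋯ (ad_{K_m})^{j_m} ρ_l. -/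
/-- Composition of linear maps in a list is the product. -/
lemma foldr_comp_eq {L : Type*} [AddCommGroup L] [Module ℝ L] (fs : List (Module.End ℝ L)) :
    (List.map (fun f : Module.End ℝ L => (f : L → L)) fs).foldr (· ∘ ·) id = (fs.prod : Module.End ℝ L) := by
  induction fs with
  | nil => rfl
  | cons f fs ih => simp only [List.map_cons, List.foldr_cons, ih, List.prod_cons]; rfl

lemma commute_list {R : Type*} [Ring R] (x : R) (l : List R) (h : ∀ y ∈ l, Commute x y) :
    Commute x l.prod := Commute.list_prod_right l x h

/-- Expansion of the reversed product over the full box. -/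
lemma box_expand {R : Type*} [Ring R] [Algebra ℝ R] (l : ℕ) (c : ℝ → ℕ → ℝ) :
    ∀ (m : ℕ) (A : Fin m → R) (_ : ∀ i j, Commute (A i) (A j)) (β : Fin m → ℝ),
    (List.ofFn fun i => ∑ k ∈ Finset.range (l + 1), c (β i) k • A i ^ k).reverse.prod
      = ∑ j ∈ Fintype.piFinset fun _ : Fin m => Finset.range (l + 1),
        (∏ i, c (β i) (j i)) • (List.ofFn fun i => A i ^ j i).prod := by
  intro m
  induction m with
  | zero => intro A hA β; simp
  | succ m ih =>
    intro A hA β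
    rw [List.ofFn_succ, List.reverse_cons, List.prod_append, List.prod_singleton,
      ih (fun i => A i.succ) (fun i j => hA _ _) (fun i => β i.succ)]
    have hc : ∀ j : Fin m → ℕ, ∀ k, Commute (A 0 ^ k) (List.ofFn fun i => A i.succ ^ j i).prod := by
      intro j k
      apply Commute.list_prod_right
      intro y hy
      obtain ⟨i, rfl⟩ := (List.mem_ofFn' _ _).1 hy
      exact (hA _ _).pow_pow _ _
    rw [Finset.sum_mul_sum, ← Finset.sum_product']
    refine Finset.sum_bij' (fun p _ => (Fin.cons p.2 p.1 : Fin (m + 1) → ℕ))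
      (fun j _ => (fun i => j i.succ, j 0)) ?_ ?_ ?_ ?_ ?_
    · rintro ⟨j, k⟩ h
      simp only [Finset.mem_product, Fintype.mem_piFinset] at h ⊢
      intro i
      refine Fin.cases ?_ (fun i => ?_) i
      · simpa using h.2
      · simpa using h.1 i
    · intro j h
      simp only [Finset.mem_product, Fintype.mem_piFinset] at h ⊢
      exact ⟨fun i => h _, h _⟩
    · rintro ⟨j, k⟩ h
      simp
    · intro j h
      exact Fin.cons_self_tail j
    · rintro ⟨j, k⟩ h
      simp only [List.ofFn_succ, List.prod_cons, Fin.prod_univ_succ, Fin.cons_zero, Fin.cons_succ]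
      rw [smul_mul_smul_comm, (hc j k).eq, mul_comm (c _ _)]

/-- Degree bookkeeping. -/
def DegOK {L : Type*} [AddCommGroup L] [Module ℝ L] (E : ℕ → Submodule ℝ L) (n s : ℕ) (x : L) :
    Prop := (s ≤ n → x ∈ E (n - s)) ∧ (n < s → x = 0)

lemma degOK_pow {L : Type*} [AddCommGroup L] [Module ℝ L] (E : ℕ → Submodule ℝ L) (n : ℕ)
    (f : Module.End ℝ L) (hf : ∀ s x, DegOK E n s x → DegOK E n (s + 1) (f x)) (k s : ℕ) (x : L)
    (hx : DegOK E n s x) : DegOK E n (k + s) ((f ^ k) x) := by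
  induction k with
  | zero => simpa using hx
  | succ k ih =>
    rw [pow_succ', Module.End.mul_apply, show k + 1 + s = k + s + 1 by ring]
    exact hf _ _ ih

lemma degOK_list {L : Type*} [AddCommGroup L] [Module ℝ L] (E : ℕ → Submodule ℝ L) (n : ℕ) :
    ∀ (m : ℕ) (A : Fin m → Module.End ℝ L)
    (_ : ∀ i s x, DegOK E n s x → DegOK E n (s + 1) (A i x)) (j : Fin m → ℕ) (x : L)
    (_ : DegOK E n 0 x), DegOK E n (∑ i, j i) ((List.ofFn fun i => A i ^ j i).prod x) := by
  intro m
  induction m with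
  | zero => intro A hA j x hx; simpa using hx
  | succ m ih =>
    intro A hA j x hx
    rw [List.ofFn_succ, List.prod_cons, Fin.sum_univ_succ, Module.End.mul_apply]
    exact degOK_pow E n _ (hA 0) _ _ _ (ih (fun i => A i.succ) (fun i => hA _) _ x hx)

/-- For `Φ i x = ∑_{j=0}^{l} ((β i)^j / j!) • (ad (K i))^j x` (the truncated exponential
`exp(ad_{β_i K_i})`), the composition `Φ (m-1) ∘ ⋯ ∘ Φ 1 ∘ Φ 0` applied to `ρ ∈ E l`
equals the multi-index sum `σ_β(ρ, l)`. -/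
theorem stmt_10 {L : Type*} [LieRing L] [LieAlgebra ℝ L]
    (E : ℕ → Submodule ℝ L)
    (h0 : ∀ a ∈ E 0, ∀ b ∈ E 0, ⁅a, b⁆ = 0)
    (h1 : ∀ i j : ℕ, 1 ≤ i + j → ∀ a ∈ E i, ∀ b ∈ E j, ⁅a, b⁆ ∈ E (i + j - 1))
    (m : ℕ) (K : Fin m → L) (hK : ∀ i, K i ∈ E 0) (β : Fin m → ℝ) (l : ℕ)
    (Φ : Fin m → L → L)
    (hΦ : ∀ (i : Fin m) (x : L),
      Φ i x = ∑ j ∈ Finset.range (l + 1),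
        ((β i) ^ j / (Nat.factorial j : ℝ)) • (fun y => ⁅K i, y⁆)^[j] x) :
    ∀ ρ ∈ E l,
      ((List.ofFn fun i => Φ i).reverse.foldr (· ∘ ·) id) ρ = sigmaB K β l ρ := by
  intro ρ hρ
  let A : Fin m → Module.End ℝ L := fun i => LieAlgebra.ad ℝ L (K i)
  have hpow : ∀ i k, (fun y => ⁅K i, y⁆)^[k] = ((A i ^ k : Module.End ℝ L) : L → L) := by
    intro i k
    rw [Module.End.coe_pow]
    rfl
  have hA : ∀ i j, Commute (A i) (A j) := by
    intro i j
    refine LinearMap.ext fun x => ?_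
    change ⁅K i, ⁅K j, x⁆⁆ = ⁅K j, ⁅K i, x⁆⁆
    rw [leibniz_lie, h0 _ (hK i) _ (hK j), zero_lie, zero_add]
  have had : ∀ j : Fin m → ℕ, adPow K j = ((List.ofFn fun i => A i ^ j i).prod : Module.End ℝ L) := by
    intro j
    rw [← foldr_comp_eq, List.map_ofFn]
    unfold adPow
    simp only [hpow]
    rfl
  have hP : Φ = fun i => ((∑ k ∈ Finset.range (l + 1),
      ((β i) ^ k / (Nat.factorial k : ℝ)) • A i ^ k : Module.End ℝ L) : L → L) := by
    funext i x
    rw [hΦ, LinearMap.sum_apply]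
    simp only [hpow, LinearMap.smul_apply]
  have hcomp : (List.ofFn fun i => Φ i).reverse.foldr (· ∘ ·) id
      = ((List.ofFn fun i => ∑ k ∈ Finset.range (l + 1),
      ((β i) ^ k / (Nat.factorial k : ℝ)) • A i ^ k).reverse.prod : Module.End ℝ L) := by
    rw [← foldr_comp_eq, List.map_reverse, List.map_ofFn, hP]
    rfl
  have hdeg : ∀ i s x, DegOK E l s x → DegOK E l (s + 1) (A i x) := by
    intro i s x hx
    constructor
    · intro hs
      have := h1 0 (l - s) (by omega) _ (hK i) _ (hx.1 (by omega))
      rwa [show 0 + (l - s) - 1 = l - (s + 1) by omega] at this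
    · intro hs
      rcases Nat.lt_or_ge l s with h | h
      · rw [hx.2 h, map_zero]
      · have := hx.1 h
        rw [show l - s = 0 by omega] at this
        exact h0 _ (hK i) _ this
  rw [hcomp, box_expand l (fun b k => b ^ k / (Nat.factorial k : ℝ)) m A hA β]
  unfold sigmaB
  rw [LinearMap.sum_apply, Finset.sum_filter]
  refine Finset.sum_congr rfl fun j _ => ?_
  rw [had, LinearMap.smul_apply]
  split_ifs with h
  · rfl
  · rw [(degOK_list E l m A hdeg j ρ ⟨fun _ => hρ, fun h => absurd h (by omega)⟩).2 (by omega),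
      smul_zero]
end

section
/- The bracket underlying the modified KP symmetry relation [σ^{(m)}(f), σ^{(n)}(g)] = σ^{(m+n−2)}((n/2) f_y g − (m/2) f g_y) is a Lie product: for all m, n, p ∈ ℤ and all f, g, h ∈ ℝ[y], (i) antisymmetry: B m n f g = − (B n m g f), and (ii) the Jacobi identity: B (m+n−2) p (B m n f g) h + B (n+p−2) m (B n p g h) f + B (p+m−2) n (B p m h f) g = 0. -/
open Polynomial

/-- The degree-`(m+n-2)` component of the bracket of the modified KP master-symmetry
generators `σ^{(m)}(f)`, `σ^{(n)}(g)`: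
`B m n f g = (n/2) • (f_y g) − (m/2) • (f g_y)`. -/
noncomputable def mkpBracket (m n : ℤ) (f g : Polynomial ℝ) : Polynomial ℝ :=
  (((n : ℝ)) / 2) • (Polynomial.derivative f * g)
    - (((m : ℝ)) / 2) • (f * Polynomial.derivative g)

/-- The bracket underlying `[σ^{(m)}(f), σ^{(n)}(g)] = σ^{(m+n-2)}((n/2) f_y g − (m/2) f g_y)`
is a Lie product: it is antisymmetric and satisfies the Jacobi identity. -/
theorem stmt_12 :
    (∀ (m n : ℤ) (f g : Polynomial ℝ), mkpBracket m n f g = -(mkpBracket n m g f)) ∧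
    (∀ (m n p : ℤ) (f g h : Polynomial ℝ),
      mkpBracket (m + n - 2) p (mkpBracket m n f g) h
        + mkpBracket (n + p - 2) m (mkpBracket n p g h) f
        + mkpBracket (p + m - 2) n (mkpBracket p m h f) g = 0) := by
  constructor
  · intro m n f g
    simp only [mkpBracket, smul_eq_C_mul]
    ring
  · intro m n p f g h
    have h2 : ∀ x : ℝ, x / 2 = x * 2⁻¹ := fun x => div_eq_mul_inv x 2
    simp only [mkpBracket, smul_eq_C_mul, h2, derivative_sub, derivative_mul, derivative_C,
      Int.cast_sub, Int.cast_add, Int.cast_ofNat, map_mul, C_sub, C_add]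
    rw [show (C (2 : ℝ)) = (2 : Polynomial ℝ) from rfl]
    ring
end
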